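/- arXiv:1511.08824 — 4 statements merged into one kernel-verified Lean document; each statement's English description precedes it below -/
import Mathlib

section
/- Let ε > 0 and let η, v : ℝ × ℝ → ℝ (time × space) be C^∞ functions with 1 + ε·η(t,x) > 0 for all (t,x), satisfying ∂_t η + ∂_x v = 0 and ∂_t v + (1+εη)∂_x η − ε(1+εη)∂_x³η + ε ∂_x( v²/(1+εη) ) = 0 for all (t,x). Then for all (t,x): ∂_t²η − ∂_x((1+εη)∂_xη) + ε ∂_x((1+εη)∂_x³η) + (2εv/(1+εη))·∂_t∂_xη = f, where f = 2ε(∂_xv)²/(1+εη) − 2ε² v (∂_xv)(∂_xη)/(1+εη)² − ε² ∂_x( (∂_xη)·v²/(1+εη)² ). -/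
/-- Partial derivative in the first (time) variable of `f : ℝ → ℝ → ℝ`. -/
noncomputable def dt1 (f : ℝ → ℝ → ℝ) : ℝ → ℝ → ℝ := fun t x => deriv (fun s => f s x) t

/-- Partial derivative in the second (space) variable of `f : ℝ → ℝ → ℝ`. -/
noncomputable def dx1 (f : ℝ → ℝ → ℝ) : ℝ → ℝ → ℝ := fun t x => deriv (fun y => f t y) x

/-!
Differentiating the continuity equation in time and commuting `∂_t` with `∂_x` turns the momentum
equation `∂_t v + g + ε ∂_x q = 0` into `∂_t² η = ∂_x g + ε ∂_x² q`. For `q = v² / h` with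
`h = 1 + ε η`, the only second-order term of `v` in `∂_x² q` is `2 v ∂_x² v / h`, and the continuity
equation differentiated in space, `∂_x² v = -∂_t ∂_x η`, moves it to the left-hand side.
-/

section PartialDerivatives

variable {f : ℝ → ℝ → ℝ}

theorem dt1_eq_fderiv {t x : ℝ}
    (hf : DifferentiableAt ℝ (fun p : ℝ × ℝ => f p.1 p.2) (t, x)) :
    dt1 f t x = fderiv ℝ (fun p : ℝ × ℝ => f p.1 p.2) (t, x) (1, 0) := by
  have hline : HasDerivAt (fun s : ℝ => (s, x)) (1, 0) t :=
    (hasDerivAt_id t).prodMk (hasDerivAt_const t x)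
  exact (hf.hasFDerivAt.comp_hasDerivAt t hline).deriv

theorem dx1_eq_fderiv {t x : ℝ}
    (hf : DifferentiableAt ℝ (fun p : ℝ × ℝ => f p.1 p.2) (t, x)) :
    dx1 f t x = fderiv ℝ (fun p : ℝ × ℝ => f p.1 p.2) (t, x) (0, 1) := by
  have hline : HasDerivAt (fun y : ℝ => (t, y)) (0, 1) x :=
    (hasDerivAt_const x t).prodMk (hasDerivAt_id x)
  exact (hf.hasFDerivAt.comp_hasDerivAt x hline).deriv

theorem uncurry_dt1_eq_fderiv (hf : Differentiable ℝ fun p : ℝ × ℝ => f p.1 p.2) :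
    (fun p : ℝ × ℝ => dt1 f p.1 p.2) =
      fun p => fderiv ℝ (fun p : ℝ × ℝ => f p.1 p.2) p (1, 0) :=
  funext fun p => dt1_eq_fderiv (hf p)

theorem uncurry_dx1_eq_fderiv (hf : Differentiable ℝ fun p : ℝ × ℝ => f p.1 p.2) :
    (fun p : ℝ × ℝ => dx1 f p.1 p.2) =
      fun p => fderiv ℝ (fun p : ℝ × ℝ => f p.1 p.2) p (0, 1) :=
  funext fun p => dx1_eq_fderiv (hf p)

theorem contDiff_dt1 {m n : WithTop ℕ∞} (hf : ContDiff ℝ n fun p : ℝ × ℝ => f p.1 p.2)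
    (hmn : m + 1 ≤ n) : ContDiff ℝ m fun p : ℝ × ℝ => dt1 f p.1 p.2 := by
  have hn : n ≠ 0 := (zero_lt_one.trans_le (le_add_self.trans hmn)).ne'
  rw [uncurry_dt1_eq_fderiv (hf.differentiable hn)]
  exact (hf.fderiv_right hmn).clm_apply contDiff_const

theorem contDiff_dx1 {m n : WithTop ℕ∞} (hf : ContDiff ℝ n fun p : ℝ × ℝ => f p.1 p.2)
    (hmn : m + 1 ≤ n) : ContDiff ℝ m fun p : ℝ × ℝ => dx1 f p.1 p.2 := by
  have hn : n ≠ 0 := (zero_lt_one.trans_le (le_add_self.trans hmn)).ne'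
  rw [uncurry_dx1_eq_fderiv (hf.differentiable hn)]
  exact (hf.fderiv_right hmn).clm_apply contDiff_const

theorem dt1_dx1_comm (hf : ContDiff ℝ 2 fun p : ℝ × ℝ => f p.1 p.2) (t x : ℝ) :
    dt1 (dx1 f) t x = dx1 (dt1 f) t x := by
  have hf_diff := hf.differentiable two_ne_zero
  have hf_fderiv : DifferentiableAt ℝ (fderiv ℝ fun p : ℝ × ℝ => f p.1 p.2) (t, x) :=
    (hf.fderiv_right one_add_one_eq_two.le).differentiable one_ne_zero _
  have hdt : Differentiable ℝ fun p : ℝ × ℝ => dt1 f p.1 p.2 :=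
    (contDiff_dt1 hf one_add_one_eq_two.le).differentiable one_ne_zero
  have hdx : Differentiable ℝ fun p : ℝ × ℝ => dx1 f p.1 p.2 :=
    (contDiff_dx1 hf one_add_one_eq_two.le).differentiable one_ne_zero
  have hsymm : IsSymmSndFDerivAt ℝ (fun p : ℝ × ℝ => f p.1 p.2) (t, x) :=
    hf.contDiffAt.isSymmSndFDerivAt (by simp)
  rw [dt1_eq_fderiv (hdx _), dx1_eq_fderiv (hdt _), uncurry_dx1_eq_fderiv hf_diff,
    uncurry_dt1_eq_fderiv hf_diff, fderiv_clm_apply hf_fderiv (by fun_prop),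
    fderiv_clm_apply hf_fderiv (by fun_prop)]
  simpa using hsymm (1, 0) (0, 1)

theorem dx1_sub {g : ℝ → ℝ → ℝ} {t x : ℝ} (hf : DifferentiableAt ℝ (f t) x)
    (hg : DifferentiableAt ℝ (g t) x) :
    dx1 (fun t x => f t x - g t x) t x = dx1 f t x - dx1 g t x :=
  deriv_fun_sub hf hg

theorem dx1_const_add (c : ℝ) (f : ℝ → ℝ → ℝ) : dx1 (fun t x => c + f t x) = dx1 f :=
  funext₂ fun _ _ => deriv_const_add c

theorem dx1_const_mul (c : ℝ) (f : ℝ → ℝ → ℝ) :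
    dx1 (fun t x => c * f t x) = fun t x => c * dx1 f t x :=
  funext₂ fun _ _ => deriv_const_mul_field c

theorem contDiff_space_slice {n : WithTop ℕ∞} (hf : ContDiff ℝ n fun p : ℝ × ℝ => f p.1 p.2)
    (t : ℝ) : ContDiff ℝ n (f t) :=
  hf.comp (contDiff_const.prodMk contDiff_id)

end PartialDerivatives

section SquareDiv

variable {𝕜 : Type*} [NontriviallyNormedField 𝕜] {u h : 𝕜 → 𝕜}

theorem deriv_sq_div {x : 𝕜} (hu : DifferentiableAt 𝕜 u x) (hh : DifferentiableAt 𝕜 h x)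
    (hx : h x ≠ 0) :
    deriv (fun y => u y ^ 2 / h y) x =
      2 * (u x * deriv u x / h x) - deriv h x * u x ^ 2 / h x ^ 2 := by
  rw [((hu.hasDerivAt.fun_pow 2).fun_div hh.hasDerivAt hx).deriv]
  field_simp
  push_cast
  ring

theorem deriv_mul_deriv_div {x : 𝕜} (hu : DifferentiableAt 𝕜 u x)
    (hu' : DifferentiableAt 𝕜 (deriv u) x) (hh : DifferentiableAt 𝕜 h x) (hx : h x ≠ 0) :
    deriv (fun y => u y * deriv u y / h y) x =
      deriv u x ^ 2 / h x + u x * deriv (deriv u) x / h x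
        - u x * deriv u x * deriv h x / h x ^ 2 := by
  rw [((hu.hasDerivAt.fun_mul hu'.hasDerivAt).fun_div hh.hasDerivAt hx).deriv]
  field_simp

theorem deriv_deriv_sq_div (hu : ContDiff 𝕜 2 u) (hh : ContDiff 𝕜 2 h) (hne : ∀ x, h x ≠ 0)
    (x : 𝕜) :
    deriv (deriv fun y => u y ^ 2 / h y) x =
      2 * (deriv u x ^ 2 / h x + u x * deriv (deriv u) x / h x
        - u x * deriv u x * deriv h x / h x ^ 2)
      - deriv (fun y => deriv h y * u y ^ 2 / h y ^ 2) x := by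
  have hu_diff : Differentiable 𝕜 u := hu.differentiable two_ne_zero
  have hh_diff : Differentiable 𝕜 h := hh.differentiable two_ne_zero
  have hu' : Differentiable 𝕜 (deriv u) := hu.differentiable_deriv_two
  have hh' : Differentiable 𝕜 (deriv h) := hh.differentiable_deriv_two
  have hfirst : (deriv fun y => u y ^ 2 / h y) =
      fun y => 2 * (u y * deriv u y / h y) - deriv h y * u y ^ 2 / h y ^ 2 :=
    funext fun y => deriv_sq_div (hu_diff y) (hh_diff y) (hne y)
  have hmain : DifferentiableAt 𝕜 (fun y => u y * deriv u y / h y) x :=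
    ((hu_diff x).fun_mul (hu' x)).fun_div (hh_diff x) (hne x)
  have hrest : DifferentiableAt 𝕜 (fun y => deriv h y * u y ^ 2 / h y ^ 2) x :=
    ((hh' x).fun_mul ((hu_diff x).fun_pow 2)).fun_div ((hh_diff x).fun_pow 2)
      (pow_ne_zero 2 (hne x))
  rw [hfirst, deriv_fun_sub (hmain.const_mul 2) hrest, deriv_const_mul 2 hmain,
    deriv_mul_deriv_div (hu_diff x) (hu' x) (hh_diff x) (hne x)]

end SquareDiv

section ConservationLaws

variable {η v : ℝ → ℝ → ℝ}

theorem dt1_eq_neg_dx1_of_continuity (hcont : ∀ t x, dt1 η t x + dx1 v t x = 0) :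
    dt1 η = fun t x => -dx1 v t x :=
  funext₂ fun t x => eq_neg_of_add_eq_zero_left (hcont t x)

theorem dt1_dx1_of_continuity (hη : ContDiff ℝ 2 fun p : ℝ × ℝ => η p.1 p.2)
    (hcont : ∀ t x, dt1 η t x + dx1 v t x = 0) (t x : ℝ) :
    dt1 (dx1 η) t x = -dx1 (dx1 v) t x := by
  rw [dt1_dx1_comm hη, dt1_eq_neg_dx1_of_continuity hcont]
  exact deriv.fun_neg

theorem dt1_dt1_of_continuity (hv : ContDiff ℝ 2 fun p : ℝ × ℝ => v p.1 p.2)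
    (hcont : ∀ t x, dt1 η t x + dx1 v t x = 0) (t x : ℝ) :
    dt1 (dt1 η) t x = -dx1 (dt1 v) t x := by
  rw [← dt1_dx1_comm hv, dt1_eq_neg_dx1_of_continuity hcont]
  exact deriv.fun_neg

theorem dt1_dt1_of_continuity_of_momentum {g q : ℝ → ℝ → ℝ} {c t x : ℝ}
    (hv : ContDiff ℝ 2 fun p : ℝ × ℝ => v p.1 p.2)
    (hg : DifferentiableAt ℝ (g t) x) (hq : DifferentiableAt ℝ (dx1 q t) x)
    (hcont : ∀ t x, dt1 η t x + dx1 v t x = 0)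
    (hmom : ∀ t x, dt1 v t x + g t x + c * dx1 q t x = 0) :
    dt1 (dt1 η) t x = dx1 g t x + c * dx1 (dx1 q) t x := by
  have hvt : dt1 v = fun t x => -(g t x + c * dx1 q t x) :=
    funext₂ fun t x => eq_neg_of_add_eq_zero_left ((add_assoc _ _ _).symm.trans (hmom t x))
  have hvtx : dx1 (dt1 v) t x = -(dx1 g t x + c * dx1 (dx1 q) t x) := by
    rw [hvt]
    exact (hg.hasDerivAt.fun_add (hq.hasDerivAt.const_mul c)).fun_neg.deriv
  rw [dt1_dt1_of_continuity hv hcont, hvtx, neg_neg]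

theorem dt1_dt1_of_continuity_of_quadratic_flux {g h : ℝ → ℝ → ℝ} {c t x : ℝ}
    (hη : ContDiff ℝ 2 fun p : ℝ × ℝ => η p.1 p.2)
    (hv : ContDiff ℝ 2 fun p : ℝ × ℝ => v p.1 p.2)
    (hh : ContDiff ℝ 2 (h t)) (hne : ∀ x, h t x ≠ 0) (hg : DifferentiableAt ℝ (g t) x)
    (hcont : ∀ t x, dt1 η t x + dx1 v t x = 0)
    (hmom : ∀ t x, dt1 v t x + g t x + c * dx1 (fun t x => v t x ^ 2 / h t x) t x = 0) :
    dt1 (dt1 η) t x - dx1 g t x + 2 * c * v t x / h t x * dt1 (dx1 η) t x =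
      2 * c * dx1 v t x ^ 2 / h t x - 2 * c * v t x * dx1 v t x * dx1 h t x / h t x ^ 2
        - c * dx1 (fun t x => dx1 h t x * v t x ^ 2 / h t x ^ 2) t x := by
  have hvx : ContDiff ℝ 2 (v t) := contDiff_space_slice hv t
  have hflux : DifferentiableAt ℝ (dx1 (fun t x => v t x ^ 2 / h t x) t) x :=
    ((hvx.pow 2).div hh hne).differentiable_deriv_two x
  have hflux_xx : dx1 (dx1 fun t x => v t x ^ 2 / h t x) t x =
      2 * (dx1 v t x ^ 2 / h t x + v t x * dx1 (dx1 v) t x / h t x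
        - v t x * dx1 v t x * dx1 h t x / h t x ^ 2)
      - dx1 (fun t x => dx1 h t x * v t x ^ 2 / h t x ^ 2) t x :=
    deriv_deriv_sq_div hvx hh hne x
  rw [dt1_dt1_of_continuity_of_momentum hv hg hflux hcont hmom, hflux_xx,
    dt1_dx1_of_continuity hη hcont]
  ring

theorem dt1_dt1_of_continuity_of_affine_depth {g : ℝ → ℝ → ℝ} {ε t x : ℝ}
    (hη : ContDiff ℝ 2 fun p : ℝ × ℝ => η p.1 p.2)
    (hv : ContDiff ℝ 2 fun p : ℝ × ℝ => v p.1 p.2)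
    (hne : ∀ x, 1 + ε * η t x ≠ 0) (hg : DifferentiableAt ℝ (g t) x)
    (hcont : ∀ t x, dt1 η t x + dx1 v t x = 0)
    (hmom : ∀ t x, dt1 v t x + g t x
      + ε * dx1 (fun t x => v t x ^ 2 / (1 + ε * η t x)) t x = 0) :
    dt1 (dt1 η) t x - dx1 g t x + 2 * ε * v t x / (1 + ε * η t x) * dt1 (dx1 η) t x =
      2 * ε * dx1 v t x ^ 2 / (1 + ε * η t x)
        - 2 * ε ^ 2 * v t x * dx1 v t x * dx1 η t x / (1 + ε * η t x) ^ 2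
        - ε ^ 2 * dx1 (fun t x => dx1 η t x * v t x ^ 2 / (1 + ε * η t x) ^ 2) t x := by
  have hdepth : ContDiff ℝ 2 fun y => 1 + ε * η t y :=
    contDiff_const.add (contDiff_const.mul (contDiff_space_slice hη t))
  have hrest : dx1 (fun t x => ε * dx1 η t x * v t x ^ 2 / (1 + ε * η t x) ^ 2) t x =
      ε * dx1 (fun t x => dx1 η t x * v t x ^ 2 / (1 + ε * η t x) ^ 2) t x := by
    simp only [mul_assoc, mul_div_assoc, dx1_const_mul]
  have hwave := dt1_dt1_of_continuity_of_quadratic_flux hη hv hdepth hne hg hcont hmom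
  rw [dx1_const_add, dx1_const_mul, hrest] at hwave
  linear_combination hwave

end ConservationLaws

theorem quasilinear_eta_1d_general {ε : ℝ} {η v : ℝ → ℝ → ℝ}
    (hη : ContDiff ℝ 4 fun p : ℝ × ℝ => η p.1 p.2)
    (hv : ContDiff ℝ 2 fun p : ℝ × ℝ => v p.1 p.2)
    (hne : ∀ t x, 1 + ε * η t x ≠ 0)
    (hcont : ∀ t x, dt1 η t x + dx1 v t x = 0)
    (hmom : ∀ t x, dt1 v t x + (1 + ε * η t x) * dx1 η t x
      - ε * (1 + ε * η t x) * dx1 (dx1 (dx1 η)) t x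
      + ε * dx1 (fun t x => v t x ^ 2 / (1 + ε * η t x)) t x = 0) (t x : ℝ) :
    dt1 (dt1 η) t x - dx1 (fun t x => (1 + ε * η t x) * dx1 η t x) t x
        + ε * dx1 (fun t x => (1 + ε * η t x) * dx1 (dx1 (dx1 η)) t x) t x
        + (2 * ε * v t x / (1 + ε * η t x)) * dt1 (dx1 η) t x
      = 2 * ε * dx1 v t x ^ 2 / (1 + ε * η t x)
        - 2 * ε ^ 2 * v t x * dx1 v t x * dx1 η t x / (1 + ε * η t x) ^ 2
        - ε ^ 2 * dx1 (fun t x => dx1 η t x * v t x ^ 2 / (1 + ε * η t x) ^ 2) t x := by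
  have hηx : ContDiff ℝ 3 fun p : ℝ × ℝ => dx1 η p.1 p.2 := contDiff_dx1 hη (by norm_num)
  have hηxxx : ContDiff ℝ 1 fun p : ℝ × ℝ => dx1 (dx1 (dx1 η)) p.1 p.2 :=
    contDiff_dx1 (contDiff_dx1 (m := 2) hηx (by norm_num)) (by norm_num)
  have hdepth : DifferentiableAt ℝ (fun y => 1 + ε * η t y) x :=
    (((contDiff_space_slice hη t).differentiable four_ne_zero x).const_mul ε).const_add 1
  have hpressure : DifferentiableAt ℝ (fun y => (1 + ε * η t y) * dx1 η t y) x :=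
    hdepth.fun_mul ((contDiff_space_slice hηx t).differentiable three_ne_zero x)
  have hcapillary : DifferentiableAt ℝ (fun y => (1 + ε * η t y) * dx1 (dx1 (dx1 η)) t y) x :=
    hdepth.fun_mul ((contDiff_space_slice hηxxx t).differentiable one_ne_zero x)
  have hwave := dt1_dt1_of_continuity_of_affine_depth
    (g := fun t x => (1 + ε * η t x) * dx1 η t x
      - ε * ((1 + ε * η t x) * dx1 (dx1 (dx1 η)) t x))
    (hη.of_le (by norm_num)) hv (hne t) (hpressure.fun_sub (hcapillary.const_mul ε)) hcont
    (fun t x => by linear_combination hmom t x)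
  rw [dx1_sub hpressure (hcapillary.const_mul ε), dx1_const_mul] at hwave
  linear_combination hwave

/-- The quasilinearized `η`-equation (Step 2 of the proof of Theorem 4.6): for smooth
solutions of the reduced system `η_t + v_x = 0`,
`v_t + (1+εη)η_x - ε(1+εη)η_{xxx} + ε(v²/(1+εη))_x = 0` with `1+εη > 0`, one has
`η_{tt} - ((1+εη)η_x)_x + ε((1+εη)η_{xxx})_x + (2εv/(1+εη)) ∂_t∂_x η = f`. -/
theorem quasilinear_eta_1d (ε : ℝ) (hε : 0 < ε) (η v : ℝ → ℝ → ℝ)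
    (hη : ContDiff ℝ (⊤ : ℕ∞) fun p : ℝ × ℝ => η p.1 p.2)
    (hv : ContDiff ℝ (⊤ : ℕ∞) fun p : ℝ × ℝ => v p.1 p.2)
    (hpos : ∀ t x, 0 < 1 + ε * η t x)
    (heq1 : ∀ t x, dt1 η t x + dx1 v t x = 0)
    (heq2 : ∀ t x, dt1 v t x + (1 + ε * η t x) * dx1 η t x
      - ε * (1 + ε * η t x) * dx1 (dx1 (dx1 η)) t x
      + ε * dx1 (fun t x => v t x ^ 2 / (1 + ε * η t x)) t x = 0) :
    ∀ t x,
      dt1 (dt1 η) t x - dx1 (fun t x => (1 + ε * η t x) * dx1 η t x) t x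
        + ε * dx1 (fun t x => (1 + ε * η t x) * dx1 (dx1 (dx1 η)) t x) t x
        + (2 * ε * v t x / (1 + ε * η t x)) * dt1 (dx1 η) t x
      = 2 * ε * dx1 v t x ^ 2 / (1 + ε * η t x)
        - 2 * ε ^ 2 * v t x * dx1 v t x * dx1 η t x / (1 + ε * η t x) ^ 2
        - ε ^ 2 * dx1 (fun t x => dx1 η t x * v t x ^ 2 / (1 + ε * η t x) ^ 2) t x := by
  exact quasilinear_eta_1d_general (contDiff_infty.1 hη 4) (contDiff_infty.1 hv 2)
    (fun t x => (hpos t x).ne') heq1 heq2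
end

section
/- Let ε > 0 and let η, v : ℝ × ℝ → ℝ be C^∞ functions with 1 + ε·η > 0 pointwise, satisfying ∂_t η + ∂_x v = 0 and ∂_t v + (1+εη)∂_x η − ε(1+εη)∂_x³η + ε ∂_x( v²/(1+εη) ) = 0. Set η' = ∂_t η, v' = ∂_t v, f = 2ε(∂_xv)²/(1+εη) − 2ε² v (∂_xv)(∂_xη)/(1+εη)² − ε² ∂_x( (∂_xη)v²/(1+εη)² ), and g = −(ε ∂_tη/(1+εη))(∂_xη − ε ∂_x³η) − 2ε(∂_xv)(∂_tv)/(1+εη)² + (ε²/(1+εη))∂_x( v² ∂_tη/(1+εη)² ). Then for all (t,x): (i) ∂_t²η' − ∂_x((1+εη)∂_xη') + ε ∂_x((1+εη)∂_x³η') + (2εv/(1+εη))∂_t∂_xη' = f', where f' = ∂_t f + ε ∂_x(∂_tη·∂_xη) − ε² ∂_x(∂_tη·∂_x³η) − 2ε ∂_t(v/(1+εη))·∂_t∂_xη; and (ii) (1/(1+εη))∂_t²v' − ∂_x²v' + ε ∂_x⁴v' + (2εv/(1+εη))∂_x( ∂_tv'/(1+εη) ) = g', where g' = ∂_t g + (ε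 ∂_tη/(1+εη)²)·∂_t²v + (2ε²v/(1+εη))·∂_x( ∂_tη·∂_tv/(1+εη)² ) − 2ε ∂_t(v/(1+εη))·∂_x( ∂_tv/(1+εη) ). -/
/-!
In the algebra of smooth functions `∂_t` and `∂_x` are commuting derivations, and the argument uses
nothing else: it works for commuting derivations `T`, `X` of any commutative ring, given an inverse
`q` of `1 + ε η`. Subtracting `X` of the momentum equation from `T` of the mass equation, or
`X - ε X³` of the mass equation from `q T` of the momentum equation, gives, modulo the mass
equation, a fourth-order wave equation for `η`, respectively `v`. The operators of these wave
equations commute with `T` up to derivatives of their coefficients, which are the terms added to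
`∂_t f` and `∂_t g`.
-/

section CommutingDerivations

variable {R A : Type*} [CommRing R] [CommRing A] [Algebra R A]

section Leibniz

variable (D : Derivation R A A)

lemma derivation_two : D 2 = 0 := by
  exact_mod_cast D.map_natCast 2

lemma derivation_sq (a : A) : D (a ^ 2) = 2 * a * D a := by
  simp only [pow_two, D.leibniz, smul_eq_mul]
  ring

lemma derivation_inverse_one_add_mul {ε η q : A} (hε : D ε = 0) (hq : (1 + ε * η) * q = 1) :
    D q = -(ε * D η * q ^ 2) := by
  rw [D.leibniz_of_mul_eq_one ((mul_comm q _).trans hq)]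
  simp only [map_add, D.leibniz, D.map_one_eq_zero, hε, smul_eq_mul]
  ring

end Leibniz

variable (T X : Derivation R A A) (ε η v q : A)

/-- The reduced system: conservation of mass and the momentum equation, for derivations `T` and `X`
in the roles of `∂_t` and `∂_x`. The inverse of `1 + ε η` enters as the separate argument `q`, so
that no division is needed. -/
def SolvesReducedSystem : Prop :=
  T η + X v = 0 ∧
    T v + (1 + ε * η) * X η - ε * (1 + ε * η) * X (X (X η)) + ε * X (v ^ 2 * q) = 0

/-- The linear operator acting on the surface elevation in the quasilinearized system, with
coefficients determined by `(η, v)`; `q` stands for the inverse of `1 + ε η`. -/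
def elevationOperator (ζ : A) : A :=
  T (T ζ) - X ((1 + ε * η) * X ζ) + ε * X ((1 + ε * η) * X (X (X ζ)))
    + 2 * ε * v * q * T (X ζ)

/-- The linear operator acting on the velocity in the quasilinearized system; `q` stands for the
inverse of `1 + ε η`. -/
def velocityOperator (w : A) : A :=
  q * T (T w) - X (X w) + ε * X (X (X (X w))) + 2 * ε * v * q * X (T w * q)

/-- The source term `f` of the quasilinearized elevation equation; `q` stands for the inverse of
`1 + ε η`. -/
def elevationSource : A :=
  2 * ε * X v ^ 2 * q - 2 * ε ^ 2 * v * X v * X η * q ^ 2 - ε ^ 2 * X (X η * v ^ 2 * q ^ 2)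

/-- The source term `g` of the quasilinearized velocity equation; `q` stands for the inverse of
`1 + ε η`. -/
def velocitySource : A :=
  -(ε * T η * q) * (X η - ε * X (X (X η))) - 2 * ε * X v * T v * q ^ 2
    + ε ^ 2 * q * X (v ^ 2 * T η * q ^ 2)

variable {T X ε η v q}

theorem SolvesReducedSystem.elevationOperator_eq (sol : SolvesReducedSystem T X ε η v q)
    (hTX : ∀ a, T (X a) = X (T a)) (hXε : X ε = 0) (hq : (1 + ε * η) * q = 1) :
    elevationOperator T X ε η v q η = elevationSource X ε η v q := by
  obtain ⟨mass, momentum⟩ := sol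
  have hXq := derivation_inverse_one_add_mul X hXε hq
  have mass_t := congrArg T mass
  have mass_x := congrArg X mass
  have momentum_x := congrArg X momentum
  simp only [elevationOperator, elevationSource, map_add, map_sub, map_neg, map_zero,
    Derivation.leibniz, derivation_sq, derivation_two, Derivation.map_one_eq_zero, smul_eq_mul,
    hTX, hXε, hXq] at mass_t mass_x momentum_x ⊢
  linear_combination mass_t - momentum_x + 2 * ε * v * q * mass_x

theorem SolvesReducedSystem.velocityOperator_eq (sol : SolvesReducedSystem T X ε η v q)
    (hTX : ∀ a, T (X a) = X (T a)) (hTε : T ε = 0) (hXε : X ε = 0) (hq : (1 + ε * η) * q = 1) :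
    velocityOperator T X ε v q v = velocitySource T X ε η v q := by
  obtain ⟨mass, momentum⟩ := sol
  have hTq := derivation_inverse_one_add_mul T hTε hq
  have hXq := derivation_inverse_one_add_mul X hXε hq
  have mass_x := congrArg X mass
  have mass_xxx := congrArg (fun a => X (X (X a))) mass
  have momentum_t := congrArg T momentum
  simp only [velocityOperator, velocitySource, map_add, map_sub, map_neg, map_zero,
    Derivation.leibniz, derivation_sq, derivation_two, Derivation.map_one_eq_zero, smul_eq_mul,
    hTX, hTε, hTq, hXq] at mass_x mass_xxx momentum_t ⊢
  linear_combination q * momentum_t - mass_x + ε * mass_xxx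
    - (X (T η) - ε * X (X (X (T η)))) * hq

lemma elevationOperator_derivation (hTX : ∀ a, T (X a) = X (T a)) (hTε : T ε = 0) (hXε : X ε = 0)
    (ζ : A) : elevationOperator T X ε η v q (T ζ) = T (elevationOperator T X ε η v q ζ)
      + ε * X (T η * X ζ) - ε ^ 2 * X (T η * X (X (X ζ))) - 2 * ε * T (v * q) * T (X ζ) := by
  simp only [elevationOperator, map_add, map_sub, map_zero, Derivation.leibniz, derivation_two,
    Derivation.map_one_eq_zero, smul_eq_mul, hTX, hTε, hXε]
  ring

lemma velocityOperator_derivation (hTX : ∀ a, T (X a) = X (T a)) (hTε : T ε = 0) (hXε : X ε = 0)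
    (hq : (1 + ε * η) * q = 1) (w : A) :
    velocityOperator T X ε v q (T w) = T (velocityOperator T X ε v q w)
      + ε * T η * q ^ 2 * T (T w) + 2 * ε ^ 2 * v * q * X (T η * T w * q ^ 2)
      - 2 * ε * T (v * q) * X (T w * q) := by
  have hTq := derivation_inverse_one_add_mul T hTε hq
  have hXq := derivation_inverse_one_add_mul X hXε hq
  simp only [velocityOperator, map_add, map_sub, map_neg, Derivation.leibniz, derivation_sq,
    derivation_two, smul_eq_mul, hTX, hTε, hTq, hXq]
  ring

theorem SolvesReducedSystem.elevationOperator_derivation_eq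
    (sol : SolvesReducedSystem T X ε η v q) (hTX : ∀ a, T (X a) = X (T a))
    (hTε : T ε = 0) (hXε : X ε = 0) (hq : (1 + ε * η) * q = 1) :
    elevationOperator T X ε η v q (T η) = T (elevationSource X ε η v q)
      + ε * X (T η * X η) - ε ^ 2 * X (T η * X (X (X η))) - 2 * ε * T (v * q) * T (X η) := by
  rw [elevationOperator_derivation hTX hTε hXε, sol.elevationOperator_eq hTX hXε hq]

theorem SolvesReducedSystem.velocityOperator_derivation_eq
    (sol : SolvesReducedSystem T X ε η v q) (hTX : ∀ a, T (X a) = X (T a))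
    (hTε : T ε = 0) (hXε : X ε = 0) (hq : (1 + ε * η) * q = 1) :
    velocityOperator T X ε v q (T v) = T (velocitySource T X ε η v q)
      + ε * T η * q ^ 2 * T (T v) + 2 * ε ^ 2 * v * q * X (T η * T v * q ^ 2)
      - 2 * ε * T (v * q) * X (T v * q) := by
  rw [velocityOperator_derivation hTX hTε hXε hq, sol.velocityOperator_eq hTX hTε hXε hq]

end CommutingDerivations

section SmoothFunctions

open scoped ContDiff

variable (𝕜 E : Type*) [NontriviallyNormedField 𝕜] [NormedAddCommGroup E] [NormedSpace 𝕜 E]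

/-- The algebra of `C^∞` scalar functions on a normed space, on which directional derivatives act
as derivations. -/
def smoothFunctions : Subalgebra 𝕜 (E → 𝕜) where
  carrier := {a | ContDiff 𝕜 ∞ a}
  mul_mem' {a b} (ha : ContDiff 𝕜 ∞ a) (hb : ContDiff 𝕜 ∞ b) := ha.mul hb
  add_mem' {a b} (ha : ContDiff 𝕜 ∞ a) (hb : ContDiff 𝕜 ∞ b) := ha.add hb
  algebraMap_mem' c := (contDiff_const : ContDiff 𝕜 ∞ fun _ => c)

variable {𝕜 E}

namespace smoothFunctions

lemma contDiff (a : smoothFunctions 𝕜 E) : ContDiff 𝕜 ∞ a.1 :=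
  a.2

lemma differentiable (a : smoothFunctions 𝕜 E) : Differentiable 𝕜 a.1 :=
  (contDiff a).differentiable (by simp)

lemma contDiff_fderiv (a : smoothFunctions 𝕜 E) : ContDiff 𝕜 ∞ (fderiv 𝕜 a.1) :=
  (contDiff a).fderiv_right (by simp)

lemma exists_mul_eq_one (a : smoothFunctions 𝕜 E) (ha : ∀ p, a.1 p ≠ 0) :
    ∃ b : smoothFunctions 𝕜 E, a * b = 1 :=
  ⟨⟨fun p => (a.1 p)⁻¹, (contDiff a).inv ha⟩,
    Subtype.ext <| funext fun p => mul_inv_cancel₀ (ha p)⟩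

variable (𝕜)

/-- The derivative in the constant direction `w`, as a derivation of the algebra of smooth
functions. -/
noncomputable def directionalDerivation (w : E) :
    Derivation 𝕜 (smoothFunctions 𝕜 E) (smoothFunctions 𝕜 E) :=
  Derivation.mk'
    { toFun a := ⟨fun p => fderiv 𝕜 a.1 p w, (contDiff_fderiv a).clm_apply contDiff_const⟩
      map_add' a b := Subtype.ext <| funext fun p => by
        simp [fderiv_add (differentiable a p) (differentiable b p)]
      map_smul' c a := Subtype.ext <| funext fun p => by
        simp [fderiv_const_smul (differentiable a p)] }
    fun a b => Subtype.ext <| funext fun p => by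
      simp [fderiv_mul (differentiable a p) (differentiable b p)]

variable {𝕜}

lemma directionalDerivation_directionalDerivation_apply (u w : E) (a : smoothFunctions 𝕜 E)
    (p : E) : (directionalDerivation 𝕜 u (directionalDerivation 𝕜 w a)).1 p
      = fderiv 𝕜 (fderiv 𝕜 a.1) p u w := by
  have hda : DifferentiableAt 𝕜 (fderiv 𝕜 a.1) p :=
    (contDiff_fderiv a).differentiable (by simp) p
  change fderiv 𝕜 (fun p => fderiv 𝕜 a.1 p w) p u = _
  simp [fderiv_clm_apply hda (differentiableAt_const w)]

theorem directionalDerivation_comm [IsRCLikeNormedField 𝕜] (u w : E) (a : smoothFunctions 𝕜 E) :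
    directionalDerivation 𝕜 u (directionalDerivation 𝕜 w a)
      = directionalDerivation 𝕜 w (directionalDerivation 𝕜 u a) := by
  have hsymm (p : E) : IsSymmSndFDerivAt 𝕜 a.1 p := by
    refine (contDiff a).contDiffAt.isSymmSndFDerivAt ?_
    rw [minSmoothness_of_isRCLikeNormedField]
    exact WithTop.coe_le_coe.2 le_top
  ext p
  rw [directionalDerivation_directionalDerivation_apply,
    directionalDerivation_directionalDerivation_apply, (hsymm p).eq]

/-- `∂_t` on smooth functions of `(t, x)`, as the derivative in the direction `(1, 0)`. -/
noncomputable abbrev timeDerivation :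
    Derivation ℝ (smoothFunctions ℝ (ℝ × ℝ)) (smoothFunctions ℝ (ℝ × ℝ)) :=
  directionalDerivation ℝ (1, 0)

/-- `∂_x` on smooth functions of `(t, x)`, as the derivative in the direction `(0, 1)`. -/
noncomputable abbrev spaceDerivation :
    Derivation ℝ (smoothFunctions ℝ (ℝ × ℝ)) (smoothFunctions ℝ (ℝ × ℝ)) :=
  directionalDerivation ℝ (0, 1)

lemma timeDerivation_spaceDerivation (a : smoothFunctions ℝ (ℝ × ℝ)) :
    timeDerivation (spaceDerivation a) = spaceDerivation (timeDerivation a) :=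
  directionalDerivation_comm _ _ a

lemma timeDerivation_apply (a : smoothFunctions ℝ (ℝ × ℝ)) (t x : ℝ) :
    (timeDerivation a).1 (t, x) = dt1 (fun s y => a.1 (s, y)) t x :=
  ((differentiable a (t, x)).hasFDerivAt.comp_hasDerivAt (f := (·, x)) t
    ((hasDerivAt_id t).prodMk (hasDerivAt_const t x))).deriv.symm

lemma spaceDerivation_apply (a : smoothFunctions ℝ (ℝ × ℝ)) (t x : ℝ) :
    (spaceDerivation a).1 (t, x) = dx1 (fun s y => a.1 (s, y)) t x :=
  ((differentiable a (t, x)).hasFDerivAt.comp_hasDerivAt (f := (t, ·)) x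
    ((hasDerivAt_const x t).prodMk (hasDerivAt_id x))).deriv.symm

end smoothFunctions

end SmoothFunctions

/-- The time-differentiated quasilinear system (4.38)–(4.39) of the paper:
with `η' = ∂_t η`, `v' = ∂_t v`, and `f`, `g` the source terms of the quasilinearized
system, `(η', v')` satisfies the same quasilinear equations with sources `f'`, `g'`. -/
theorem quasilinear_time_diff_1d (ε : ℝ) (hε : 0 < ε) (η v f g : ℝ → ℝ → ℝ)
    (hη : ContDiff ℝ (⊤ : ℕ∞) fun p : ℝ × ℝ => η p.1 p.2)
    (hv : ContDiff ℝ (⊤ : ℕ∞) fun p : ℝ × ℝ => v p.1 p.2)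
    (hpos : ∀ t x, 0 < 1 + ε * η t x)
    (heq1 : ∀ t x, dt1 η t x + dx1 v t x = 0)
    (heq2 : ∀ t x, dt1 v t x + (1 + ε * η t x) * dx1 η t x
      - ε * (1 + ε * η t x) * dx1 (dx1 (dx1 η)) t x
      + ε * dx1 (fun t x => v t x ^ 2 / (1 + ε * η t x)) t x = 0)
    (hf : ∀ t x, f t x = 2 * ε * dx1 v t x ^ 2 / (1 + ε * η t x)
      - 2 * ε ^ 2 * v t x * dx1 v t x * dx1 η t x / (1 + ε * η t x) ^ 2
      - ε ^ 2 * dx1 (fun t x => dx1 η t x * v t x ^ 2 / (1 + ε * η t x) ^ 2) t x)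
    (hg : ∀ t x, g t x =
      -(ε * dt1 η t x / (1 + ε * η t x)) * (dx1 η t x - ε * dx1 (dx1 (dx1 η)) t x)
      - 2 * ε * dx1 v t x * dt1 v t x / (1 + ε * η t x) ^ 2
      + ε ^ 2 / (1 + ε * η t x) *
          dx1 (fun t x => v t x ^ 2 * dt1 η t x / (1 + ε * η t x) ^ 2) t x) :
    (∀ t x,
      dt1 (dt1 (dt1 η)) t x
        - dx1 (fun t x => (1 + ε * η t x) * dx1 (dt1 η) t x) t x
        + ε * dx1 (fun t x => (1 + ε * η t x) * dx1 (dx1 (dx1 (dt1 η))) t x) t x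
        + (2 * ε * v t x / (1 + ε * η t x)) * dt1 (dx1 (dt1 η)) t x
      = dt1 f t x + ε * dx1 (fun t x => dt1 η t x * dx1 η t x) t x
        - ε ^ 2 * dx1 (fun t x => dt1 η t x * dx1 (dx1 (dx1 η)) t x) t x
        - 2 * ε * dt1 (fun t x => v t x / (1 + ε * η t x)) t x * dt1 (dx1 η) t x) ∧
    (∀ t x,
      (1 / (1 + ε * η t x)) * dt1 (dt1 (dt1 v)) t x
        - dx1 (dx1 (dt1 v)) t x
        + ε * dx1 (dx1 (dx1 (dx1 (dt1 v)))) t x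
        + (2 * ε * v t x / (1 + ε * η t x)) *
            dx1 (fun t x => dt1 (dt1 v) t x / (1 + ε * η t x)) t x
      = dt1 g t x + ε * dt1 η t x / (1 + ε * η t x) ^ 2 * dt1 (dt1 v) t x
        + 2 * ε ^ 2 * v t x / (1 + ε * η t x) *
            dx1 (fun t x => dt1 η t x * dt1 v t x / (1 + ε * η t x) ^ 2) t x
        - 2 * ε * dt1 (fun t x => v t x / (1 + ε * η t x)) t x *
            dx1 (fun t x => dt1 v t x / (1 + ε * η t x)) t x) := by
  let H : smoothFunctions ℝ (ℝ × ℝ) := ⟨fun p => η p.1 p.2, hη⟩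
  let V : smoothFunctions ℝ (ℝ × ℝ) := ⟨fun p => v p.1 p.2, hv⟩
  let e : smoothFunctions ℝ (ℝ × ℝ) := algebraMap ℝ _ ε
  obtain ⟨q, hq⟩ := smoothFunctions.exists_mul_eq_one (1 + e * H) fun p => (hpos p.1 p.2).ne'
  have q_apply (t x : ℝ) : q.1 (t, x) = (1 + ε * η t x)⁻¹ :=
    eq_inv_of_mul_eq_one_right (congrFun (congrArg Subtype.val hq) (t, x))
  have two_apply (p : ℝ × ℝ) : (2 : smoothFunctions ℝ (ℝ × ℝ)).1 p = 2 := rfl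
  open smoothFunctions in
  have time_diff (sol : SolvesReducedSystem timeDerivation spaceDerivation e H V q) :=
    And.intro
      (sol.elevationOperator_derivation_eq timeDerivation_spaceDerivation
        (Derivation.map_algebraMap _ ε) (Derivation.map_algebraMap _ ε) hq)
      (sol.velocityOperator_derivation_eq timeDerivation_spaceDerivation
        (Derivation.map_algebraMap _ ε) (Derivation.map_algebraMap _ ε) hq)
  -- Evaluation at `(t, x)` turns these ring identities into identities between `dt1` and `dx1`.
  simp only [SolvesReducedSystem, elevationOperator, velocityOperator, elevationSource,
    velocitySource, Subtype.ext_iff, funext_iff, Prod.forall, Subalgebra.coe_add,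
    Subalgebra.coe_sub, Subalgebra.coe_mul, Subalgebra.coe_neg, Subalgebra.coe_pow,
    Subalgebra.coe_one, Subalgebra.coe_zero, Pi.add_apply, Pi.sub_apply, Pi.mul_apply,
    Pi.neg_apply, Pi.pow_apply, Pi.one_apply, Pi.zero_apply, smoothFunctions.timeDerivation_apply,
    smoothFunctions.spaceDerivation_apply, q_apply, two_apply] at time_diff
  obtain rfl : f = _ := funext₂ hf
  obtain rfl : g = _ := funext₂ hg
  simp only [div_eq_mul_inv, ← inv_pow, one_mul] at heq2 ⊢
  exact time_diff ⟨heq1, heq2⟩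
end

section
/- Let ε > 0 and let η, u : ℝ × ℝ → ℝ (time × space) be C^∞ functions satisfying ∂_t η + ∂_x u + ε ∂_x(ηu) = 0 for all (t,x). Define η̃ = η − ε ∂_x²η. Then for all (t,x): ∂_t η̃ + ∂_x u − ε ∂_x³u + ε ∂_x(η̃ u) = ε²·( 2(∂_x²η)(∂_x u) + 3(∂_xη)(∂_x²u) + η·∂_x³u ). -/
/-!
Apply `1 - ε ∂ₓ²` to the equation of `η`. Since `∂ₜ` commutes with `∂ₓ²`, the result is the equation
for `η̃` except that `(1 - ε ∂ₓ²) ∂ₓ(η u)` stands in place of `∂ₓ(η̃ u)`. The error is therefore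
`ε²` times the commutator `∂ₓ³(η u) - ∂ₓ((∂ₓ²η) u)`, in which the Leibniz rule cancels the terms
with three derivatives on `η`.
-/

section OneVariable

variable {𝕜 A : Type*} [NontriviallyNormedField 𝕜] [NormedRing A] [NormedAlgebra 𝕜 A]
  {f g : 𝕜 → A}

theorem differentiable_deriv_deriv {F : Type*} [NormedAddCommGroup F] [NormedSpace 𝕜 F] {f : 𝕜 → F}
    (hf : ContDiff 𝕜 3 f) : Differentiable 𝕜 (deriv (deriv f)) :=
  (hf.iterate_deriv' 1 2).differentiable one_ne_zero

theorem deriv_sub_const_mul_mul {h : 𝕜 → A} {x : 𝕜} (c : A) (hf : DifferentiableAt 𝕜 f x)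
    (hg : DifferentiableAt 𝕜 g x) (hh : DifferentiableAt 𝕜 h x) :
    deriv (fun y => (f y - c * g y) * h y) x =
      deriv (fun y => f y * h y) x - c * deriv (fun y => g y * h y) x := by
  simp only [sub_mul, mul_assoc]
  exact ((hf.mul hh).hasDerivAt.sub ((hg.mul hh).hasDerivAt.const_mul c)).deriv

theorem deriv_deriv_add_deriv_add_const_mul_deriv_eq_zero {w : 𝕜 → A} {c : A}
    (hf : ContDiff 𝕜 3 f) (hg : ContDiff 𝕜 3 g)
    (hw : ∀ x, w x + deriv f x + c * deriv g x = 0) (x : 𝕜) :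
    deriv (deriv w) x + deriv (deriv (deriv f)) x + c * deriv (deriv (deriv g)) x = 0 := by
  have hf' : ContDiff 𝕜 2 (deriv f) := hf.iterate_deriv' 2 1
  have hg' : ContDiff 𝕜 2 (deriv g) := hg.iterate_deriv' 2 1
  have hw_eq : w = fun y => -(deriv f y + c * deriv g y) :=
    funext fun y => eq_neg_of_add_eq_zero_left (by rw [← add_assoc, hw y])
  have hw_deriv₂ : iteratedDeriv 2 w x =
      -(iteratedDeriv 2 (deriv f) x + c * iteratedDeriv 2 (deriv g) x) := by
    rw [hw_eq, iteratedDeriv_fun_neg,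
      iteratedDeriv_fun_add hf'.contDiffAt (contDiff_const.mul hg').contDiffAt,
      iteratedDeriv_const_mul c hg'.contDiffAt]
  simp only [iteratedDeriv_succ, iteratedDeriv_zero] at hw_deriv₂
  rw [hw_deriv₂, add_assoc, neg_add_cancel]

theorem deriv_deriv_deriv_mul (hf : ContDiff 𝕜 3 f) (hg : ContDiff 𝕜 3 g) (x : 𝕜) :
    deriv (deriv (deriv (f * g))) x =
      deriv (deriv (deriv f)) x * g x + 3 * deriv (deriv f) x * deriv g x
        + 3 * deriv f x * deriv (deriv g) x + f x * deriv (deriv (deriv g)) x := by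
  have leibniz := iteratedDeriv_mul (n := 3) (x := x) hf.contDiffAt hg.contDiffAt
  simp only [Finset.sum_range_succ, Finset.sum_range_zero, iteratedDeriv_succ, iteratedDeriv_zero,
    Nat.choose, Nat.sub_self, Nat.sub_zero, Nat.reduceAdd, Nat.reduceSub] at leibniz
  rw [leibniz]
  push_cast
  noncomm_ring

theorem deriv_deriv_deriv_mul_sub_deriv_deriv_deriv_mul
    (hf : ContDiff 𝕜 3 f) (hg : ContDiff 𝕜 3 g) (x : 𝕜) :
    deriv (deriv (deriv (f * g))) x - deriv (deriv (deriv f) * g) x =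
      2 * deriv (deriv f) x * deriv g x + 3 * deriv f x * deriv (deriv g) x
        + f x * deriv (deriv (deriv g)) x := by
  have hg₀ : Differentiable 𝕜 g := hg.differentiable three_ne_zero
  rw [deriv_deriv_deriv_mul hf hg, deriv_mul (differentiable_deriv_deriv hf x) (hg₀ x)]
  noncomm_ring

end OneVariable

section PartialDerivatives

variable {𝕜 F : Type*} [NormedAddCommGroup F]

section NontriviallyNormedField

variable [NontriviallyNormedField 𝕜] [NormedSpace 𝕜 F] {φ : 𝕜 × 𝕜 → F}

theorem deriv_comp_prodMk_left {t x : 𝕜} (hφ : DifferentiableAt 𝕜 φ (t, x)) :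
    deriv (fun s => φ (s, x)) t = fderiv 𝕜 φ (t, x) (1, 0) :=
  (hφ.hasFDerivAt.comp_hasDerivAt t ((hasDerivAt_id' t).prodMk (hasDerivAt_const t x))).deriv

theorem deriv_comp_prodMk_right {t x : 𝕜} (hφ : DifferentiableAt 𝕜 φ (t, x)) :
    deriv (fun y => φ (t, y)) x = fderiv 𝕜 φ (t, x) (0, 1) :=
  (hφ.hasFDerivAt.comp_hasDerivAt x ((hasDerivAt_const x t).prodMk (hasDerivAt_id' x))).deriv

end NontriviallyNormedField

theorem deriv_deriv_comm [RCLike 𝕜] [NormedSpace 𝕜 F] {φ : 𝕜 × 𝕜 → F} (hφ : ContDiff 𝕜 2 φ)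
    (t x : 𝕜) :
    deriv (fun s => deriv (fun y => φ (s, y)) x) t =
      deriv (fun y => deriv (fun s => φ (s, y)) t) x := by
  have hφ₁ : Differentiable 𝕜 φ := hφ.differentiable two_ne_zero
  have hφ₂ : Differentiable 𝕜 (fderiv 𝕜 φ) :=
    (hφ.fderiv_right (m := 1) one_add_one_eq_two.le).differentiable one_ne_zero
  have hsymm : IsSymmSndFDerivAt 𝕜 φ (t, x) :=
    hφ.contDiffAt.isSymmSndFDerivAt (by rw [minSmoothness_of_isRCLikeNormedField])
  have hdir (v : 𝕜 × 𝕜) : Differentiable 𝕜 fun p => fderiv 𝕜 φ p v :=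
    fun p => (hφ₂ p).clm_apply (differentiableAt_const v)
  have hsnd (v w : 𝕜 × 𝕜) :
      fderiv 𝕜 (fun p => fderiv 𝕜 φ p v) (t, x) w = fderiv 𝕜 (fderiv 𝕜 φ) (t, x) w v := by
    simp [fderiv_clm_apply (hφ₂ _) (differentiableAt_const v)]
  simp only [deriv_comp_prodMk_left (hφ₁ _), deriv_comp_prodMk_right (hφ₁ _)]
  rw [deriv_comp_prodMk_left (hdir (0, 1) _), deriv_comp_prodMk_right (hdir (1, 0) _), hsnd, hsnd,
    hsymm.eq]

end PartialDerivatives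

section SpaceTime

open Function (uncurry)

variable {f : ℝ → ℝ → ℝ}

theorem contDiff_uncurry_dx1 {m n : WithTop ℕ∞} (hf : ContDiff ℝ n (uncurry f))
    (hmn : m + 1 ≤ n) : ContDiff ℝ m (uncurry (dx1 f)) := by
  have hpartial : ContDiff ℝ m fun p : ℝ × ℝ => fderiv ℝ (f p.1) p.2 :=
    ContDiff.fderiv (f := fun (p : ℝ × ℝ) y => f p.1 y)
      (hf.comp (contDiff_fst.fst.prodMk contDiff_snd)) contDiff_snd hmn
  exact hpartial.clm_apply contDiff_const

theorem dt1_dx1_comm_s13 (hf : ContDiff ℝ 2 (uncurry f)) : dt1 (dx1 f) = dx1 (dt1 f) :=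
  funext₂ (deriv_deriv_comm hf)

theorem dt1_dx1_dx1_comm (hf : ContDiff ℝ 3 (uncurry f)) :
    dt1 (dx1 (dx1 f)) = dx1 (dx1 (dt1 f)) := by
  rw [dt1_dx1_comm_s13 (contDiff_uncurry_dx1 hf two_add_one_eq_three.le),
    dt1_dx1_comm_s13 (hf.of_le (by norm_num))]

theorem dt1_sub_const_mul_dx1_dx1 (hf : ContDiff ℝ 3 (uncurry f)) (ε t x : ℝ) :
    dt1 (fun t x => f t x - ε * dx1 (dx1 f) t x) t x =
      dt1 f t x - ε * dx1 (dx1 (dt1 f)) t x := by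
  have hfxx : ContDiff ℝ 1 (uncurry (dx1 (dx1 f))) :=
    contDiff_uncurry_dx1 (contDiff_uncurry_dx1 hf two_add_one_eq_three.le) one_add_one_eq_two.le
  have hft : DifferentiableAt ℝ (fun s => f s x) t :=
    (hf.comp (contDiff_prodMk_left x)).differentiable three_ne_zero t
  have hfxxt : DifferentiableAt ℝ (fun s => dx1 (dx1 f) s x) t :=
    (hfxx.comp (contDiff_prodMk_left x)).differentiable one_ne_zero t
  rw [← dt1_dx1_dx1_comm hf]
  exact (hft.hasDerivAt.sub (hfxxt.hasDerivAt.const_mul ε)).deriv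

end SpaceTime

theorem eta_tilde_identity_1d_general (ε : ℝ) (η u : ℝ → ℝ → ℝ)
    (hη : ContDiff ℝ 3 (Function.uncurry η)) (hu : ∀ t, ContDiff ℝ 3 (u t))
    (heq : ∀ t x, dt1 η t x + dx1 u t x + ε * dx1 (fun t x => η t x * u t x) t x = 0) (t x : ℝ) :
    dt1 (fun t x => η t x - ε * dx1 (dx1 η) t x) t x
        + dx1 u t x - ε * dx1 (dx1 (dx1 u)) t x
        + ε * dx1 (fun t x => (η t x - ε * dx1 (dx1 η) t x) * u t x) t x
      = ε ^ 2 * (2 * dx1 (dx1 η) t x * dx1 u t x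
          + 3 * dx1 η t x * dx1 (dx1 u) t x
          + η t x * dx1 (dx1 (dx1 u)) t x) := by
  have hηt : ContDiff ℝ 3 (η t) := hη.comp (contDiff_prodMk_right t)
  have heq_xx : dx1 (dx1 (dt1 η)) t x + dx1 (dx1 (dx1 u)) t x
      + ε * dx1 (dx1 (dx1 fun t x => η t x * u t x)) t x = 0 :=
    deriv_deriv_add_deriv_add_const_mul_deriv_eq_zero (hu t) (hηt.mul (hu t)) (heq t) x
  have hflux : dx1 (fun t x => (η t x - ε * dx1 (dx1 η) t x) * u t x) t x =
      dx1 (fun t x => η t x * u t x) t x - ε * dx1 (fun t x => dx1 (dx1 η) t x * u t x) t x :=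
    deriv_sub_const_mul_mul ε (hηt.differentiable three_ne_zero x)
      (differentiable_deriv_deriv hηt x) ((hu t).differentiable three_ne_zero x)
  have hcomm : dx1 (dx1 (dx1 fun t x => η t x * u t x)) t x
      - dx1 (fun t x => dx1 (dx1 η) t x * u t x) t x =
      2 * dx1 (dx1 η) t x * dx1 u t x + 3 * dx1 η t x * dx1 (dx1 u) t x
        + η t x * dx1 (dx1 (dx1 u)) t x :=
    deriv_deriv_deriv_mul_sub_deriv_deriv_deriv_mul hηt (hu t) x
  rw [dt1_sub_const_mul_dx1_dx1 hη, hflux]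
  linear_combination heq t x - ε * heq_xx + ε ^ 2 * hcomm

/-- Equation (3.36) of the paper: if `η_t + u_x + ε(ηu)_x = 0` and `η̃ = η - ε η_{xx}`,
then `η̃_t + u_x - ε u_{xxx} + ε(η̃ u)_x = ε²(2η_{xx}u_x + 3η_x u_{xx} + η u_{xxx})`. -/
theorem eta_tilde_identity_1d (ε : ℝ) (hε : 0 < ε) (η u : ℝ → ℝ → ℝ)
    (hη : ContDiff ℝ (⊤ : ℕ∞) fun p : ℝ × ℝ => η p.1 p.2)
    (hu : ContDiff ℝ (⊤ : ℕ∞) fun p : ℝ × ℝ => u p.1 p.2)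
    (heq : ∀ t x, dt1 η t x + dx1 u t x + ε * dx1 (fun t x => η t x * u t x) t x = 0) :
    ∀ t x,
      dt1 (fun t x => η t x - ε * dx1 (dx1 η) t x) t x
        + dx1 u t x - ε * dx1 (dx1 (dx1 u)) t x
        + ε * dx1 (fun t x => (η t x - ε * dx1 (dx1 η) t x) * u t x) t x
      = ε ^ 2 * (2 * dx1 (dx1 η) t x * dx1 u t x
          + 3 * dx1 η t x * dx1 (dx1 u) t x
          + η t x * dx1 (dx1 (dx1 u)) t x) := by
  exact eta_tilde_identity_1d_general ε η u (contDiff_infty.1 hη 3)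
    (fun t => contDiff_infty.1 (hu.comp (contDiff_prodMk_right t)) 3) heq
end

section
/- Let ε > 0 and let η : ℝ × ℝ² → ℝ and u : ℝ × ℝ² → ℝ² be C^∞ functions (time × space) satisfying ∂_t η + ∇·u + ε ∇·(ηu) = 0 for all (t,x). Define η̃ = η − εΔη. Then for all (t,x): ∂_t η̃ + ∇·u − εΔ(∇·u) + ε ∇·(η̃ u) = ε²·( Δ(∇·(ηu)) − ∇·((Δη)·u) ). -/
/-- Time derivative of `f : ℝ → ℝ → ℝ → ℝ` (time, then two space variables). -/
noncomputable def dt2 (f : ℝ → ℝ → ℝ → ℝ) : ℝ → ℝ → ℝ → ℝ :=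
  fun t x y => deriv (fun s => f s x y) t

/-- First space partial derivative. -/
noncomputable def dx2 (f : ℝ → ℝ → ℝ → ℝ) : ℝ → ℝ → ℝ → ℝ :=
  fun t x y => deriv (fun z => f t z y) x

/-- Second space partial derivative. -/
noncomputable def dy2 (f : ℝ → ℝ → ℝ → ℝ) : ℝ → ℝ → ℝ → ℝ :=
  fun t x y => deriv (fun z => f t x z) y

/-- Spatial Laplacian. -/
noncomputable def lap2 (f : ℝ → ℝ → ℝ → ℝ) : ℝ → ℝ → ℝ → ℝ :=
  fun t x y => dx2 (dx2 f) t x y + dy2 (dy2 f) t x y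

/-- Spatial divergence of a planar vector field `(f₁, f₂)`. -/
noncomputable def div2 (f₁ f₂ : ℝ → ℝ → ℝ → ℝ) : ℝ → ℝ → ℝ → ℝ :=
  fun t x y => dx2 f₁ t x y + dy2 f₂ t x y

/-!
Apply `1 - εΔ` to the equation. As `Δ` commutes with `∂_t`, the first term becomes `∂_t η̃`, and the
nonlinear term becomes `ε∇·(ηu) - ε²Δ∇·(ηu)`. Since `ε∇·(η̃u) = ε∇·(ηu) - ε²∇·((Δη)u)`, trading one
for the other leaves the `ε²` terms on the right-hand side.
-/

section NormedSpace

variable {𝕜 E F : Type*} [NontriviallyNormedField 𝕜] [NormedAddCommGroup E] [NormedSpace 𝕜 E]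
  [NormedAddCommGroup F] [NormedSpace 𝕜 F] {f : E → F} {n : WithTop ℕ∞}

theorem fderiv_fderiv_apply_comm {p : E} (hf : ContDiffAt 𝕜 n f p)
    (hn : minSmoothness 𝕜 2 ≤ n) (v w : E) :
    fderiv 𝕜 (fun q => fderiv 𝕜 f q v) p w = fderiv 𝕜 (fun q => fderiv 𝕜 f q w) p v := by
  have hf' : DifferentiableAt 𝕜 (fderiv 𝕜 f) p :=
    (hf.fderiv_right (m := 1) (le_minSmoothness.trans hn)).differentiableAt one_ne_zero
  have fderiv_apply_const (a b : E) :
      fderiv 𝕜 (fun q => fderiv 𝕜 f q a) p b = fderiv 𝕜 (fderiv 𝕜 f) p b a := by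
    simp [fderiv_clm_apply hf' (differentiableAt_const a)]
  rw [fderiv_apply_const, fderiv_apply_const]
  exact hf.isSymmSndFDerivAt hn w v

end NormedSpace

/-- The derivative of `f` in the space-time direction `v = (v_t, v_x, v_y)`. It agrees with `dt2`,
`dx2`, `dy2` in the coordinate directions when `f` is jointly differentiable, and treats the three
of them uniformly. -/
noncomputable def dirDeriv (v : ℝ × ℝ × ℝ) (f : ℝ → ℝ → ℝ → ℝ) : ℝ → ℝ → ℝ → ℝ :=
  fun t x y => fderiv ℝ ↿f (t, x, y) v

section SpaceTime

variable {f g f₁ f₂ g₁ g₂ u₁ u₂ : ℝ → ℝ → ℝ → ℝ} {m n : WithTop ℕ∞}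

theorem contDiff_dirDeriv (hf : ContDiff ℝ m ↿f) (hnm : n + 1 ≤ m) (v : ℝ × ℝ × ℝ) :
    ContDiff ℝ n ↿(dirDeriv v f) :=
  (hf.fderiv_right hnm).clm_apply contDiff_const

theorem dirDeriv_add (hf : Differentiable ℝ ↿f) (hg : Differentiable ℝ ↿g) (v : ℝ × ℝ × ℝ) :
    dirDeriv v (f + g) = dirDeriv v f + dirDeriv v g := by
  funext t x y
  exact congrArg (· v) (fderiv_add (hf (t, x, y)) (hg (t, x, y)))

theorem dirDeriv_comm (hf : ContDiff ℝ 2 ↿f) (v w : ℝ × ℝ × ℝ) :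
    dirDeriv v (dirDeriv w f) = dirDeriv w (dirDeriv v f) := by
  funext t x y
  exact fderiv_fderiv_apply_comm hf.contDiffAt (by simp) w v

theorem dt2_eq_dirDeriv (hf : Differentiable ℝ ↿f) : dt2 f = dirDeriv (1, 0, 0) f := by
  funext t x y
  have time_line : HasDerivAt (fun s : ℝ => (s, x, y)) (1, 0, 0) t :=
    (hasDerivAt_id t).prodMk (hasDerivAt_const t (x, y))
  exact ((hf (t, x, y)).hasFDerivAt.comp_hasDerivAt t time_line).deriv

theorem dx2_eq_dirDeriv (hf : Differentiable ℝ ↿f) : dx2 f = dirDeriv (0, 1, 0) f := by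
  funext t x y
  have x_line : HasDerivAt (fun s : ℝ => (t, s, y)) (0, 1, 0) x :=
    (hasDerivAt_const x t).prodMk ((hasDerivAt_id x).prodMk (hasDerivAt_const x y))
  exact ((hf (t, x, y)).hasFDerivAt.comp_hasDerivAt x x_line).deriv

theorem dy2_eq_dirDeriv (hf : Differentiable ℝ ↿f) : dy2 f = dirDeriv (0, 0, 1) f := by
  funext t x y
  have y_line : HasDerivAt (fun s : ℝ => (t, x, s)) (0, 0, 1) y :=
    (hasDerivAt_const y t).prodMk ((hasDerivAt_const y x).prodMk (hasDerivAt_id y))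
  exact ((hf (t, x, y)).hasFDerivAt.comp_hasDerivAt y y_line).deriv

theorem div2_eq_dirDeriv (hf₁ : Differentiable ℝ ↿f₁) (hf₂ : Differentiable ℝ ↿f₂) :
    div2 f₁ f₂ = dirDeriv (0, 1, 0) f₁ + dirDeriv (0, 0, 1) f₂ := by
  rw [← dx2_eq_dirDeriv hf₁, ← dy2_eq_dirDeriv hf₂]
  rfl

theorem lap2_eq_dirDeriv (hf : ContDiff ℝ 2 ↿f) :
    lap2 f = dirDeriv (0, 1, 0) (dirDeriv (0, 1, 0) f)
      + dirDeriv (0, 0, 1) (dirDeriv (0, 0, 1) f) := by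
  have hf' (v : ℝ × ℝ × ℝ) : Differentiable ℝ ↿(dirDeriv v f) :=
    (contDiff_dirDeriv hf one_add_one_eq_two.le v).differentiable one_ne_zero
  have hf₀ : Differentiable ℝ ↿f := hf.differentiable two_ne_zero
  rw [← dx2_eq_dirDeriv (hf' _), ← dy2_eq_dirDeriv (hf' _), ← dx2_eq_dirDeriv hf₀,
    ← dy2_eq_dirDeriv hf₀]
  rfl

theorem contDiff_dt2 (hf : ContDiff ℝ m ↿f) (hnm : n + 1 ≤ m) : ContDiff ℝ n ↿(dt2 f) := by
  have hm : m ≠ 0 := (one_pos.trans_le (le_add_self.trans hnm)).ne'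
  rw [dt2_eq_dirDeriv (hf.differentiable hm)]
  exact contDiff_dirDeriv hf hnm _

theorem contDiff_div2 (hf₁ : ContDiff ℝ m ↿f₁) (hf₂ : ContDiff ℝ m ↿f₂) (hnm : n + 1 ≤ m) :
    ContDiff ℝ n ↿(div2 f₁ f₂) := by
  have hm : m ≠ 0 := (one_pos.trans_le (le_add_self.trans hnm)).ne'
  rw [div2_eq_dirDeriv (hf₁.differentiable hm) (hf₂.differentiable hm)]
  exact (contDiff_dirDeriv hf₁ hnm _).add (contDiff_dirDeriv hf₂ hnm _)

theorem contDiff_lap2 (hf : ContDiff ℝ m ↿f) (hnm : n + 2 ≤ m) : ContDiff ℝ n ↿(lap2 f) := by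
  have hnm' : n + 1 + 1 ≤ m := by rwa [add_assoc, one_add_one_eq_two]
  have contDiff_dirDeriv₂ (v : ℝ × ℝ × ℝ) : ContDiff ℝ n ↿(dirDeriv v (dirDeriv v f)) :=
    contDiff_dirDeriv (contDiff_dirDeriv hf hnm' v) le_rfl v
  rw [lap2_eq_dirDeriv (hf.of_le (le_add_self.trans hnm))]
  exact (contDiff_dirDeriv₂ _).add (contDiff_dirDeriv₂ _)

theorem dt2_add (hf : Differentiable ℝ ↿f) (hg : Differentiable ℝ ↿g) :
    dt2 (f + g) = dt2 f + dt2 g := by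
  rw [dt2_eq_dirDeriv (hf.add hg), dt2_eq_dirDeriv hf, dt2_eq_dirDeriv hg, dirDeriv_add hf hg]

theorem div2_add (hf₁ : Differentiable ℝ ↿f₁) (hf₂ : Differentiable ℝ ↿f₂)
    (hg₁ : Differentiable ℝ ↿g₁) (hg₂ : Differentiable ℝ ↿g₂) :
    div2 (f₁ + g₁) (f₂ + g₂) = div2 f₁ f₂ + div2 g₁ g₂ := by
  rw [div2_eq_dirDeriv (hf₁.add hg₁) (hf₂.add hg₂), div2_eq_dirDeriv hf₁ hf₂,
    div2_eq_dirDeriv hg₁ hg₂, dirDeriv_add hf₁ hg₁, dirDeriv_add hf₂ hg₂]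
  exact add_add_add_comm _ _ _ _

theorem lap2_add (hf : ContDiff ℝ 2 ↿f) (hg : ContDiff ℝ 2 ↿g) :
    lap2 (f + g) = lap2 f + lap2 g := by
  have dirDeriv₂_add (v : ℝ × ℝ × ℝ) : dirDeriv v (dirDeriv v (f + g)) =
      dirDeriv v (dirDeriv v f) + dirDeriv v (dirDeriv v g) := by
    rw [dirDeriv_add (hf.differentiable two_ne_zero) (hg.differentiable two_ne_zero),
      dirDeriv_add ((contDiff_dirDeriv hf one_add_one_eq_two.le v).differentiable one_ne_zero)
        ((contDiff_dirDeriv hg one_add_one_eq_two.le v).differentiable one_ne_zero)]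
  rw [lap2_eq_dirDeriv (hf.add hg), lap2_eq_dirDeriv hf, lap2_eq_dirDeriv hg, dirDeriv₂_add,
    dirDeriv₂_add]
  exact add_add_add_comm _ _ _ _

theorem dt2_const_smul (c : ℝ) (f : ℝ → ℝ → ℝ → ℝ) : dt2 (c • f) = c • dt2 f := by
  funext t x y
  exact deriv_fun_const_smul_field c _

theorem dx2_const_smul (c : ℝ) (f : ℝ → ℝ → ℝ → ℝ) : dx2 (c • f) = c • dx2 f := by
  funext t x y
  exact deriv_fun_const_smul_field c _

theorem dy2_const_smul (c : ℝ) (f : ℝ → ℝ → ℝ → ℝ) : dy2 (c • f) = c • dy2 f := by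
  funext t x y
  exact deriv_fun_const_smul_field c _

theorem div2_const_smul (c : ℝ) (f₁ f₂ : ℝ → ℝ → ℝ → ℝ) :
    div2 (c • f₁) (c • f₂) = c • div2 f₁ f₂ := by
  unfold div2
  rw [dx2_const_smul, dy2_const_smul]
  exact (smul_add c (dx2 f₁) (dy2 f₂)).symm

theorem lap2_const_smul (c : ℝ) (f : ℝ → ℝ → ℝ → ℝ) : lap2 (c • f) = c • lap2 f := by
  unfold lap2
  rw [dx2_const_smul, dx2_const_smul, dy2_const_smul, dy2_const_smul]
  exact (smul_add c (dx2 (dx2 f)) (dy2 (dy2 f))).symm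

theorem dt2_lap2 (hf : ContDiff ℝ 3 ↿f) : dt2 (lap2 f) = lap2 (dt2 f) := by
  have hf₂ : ContDiff ℝ 2 ↿f := hf.of_le (by norm_num)
  have hf' (v : ℝ × ℝ × ℝ) : ContDiff ℝ 2 ↿(dirDeriv v f) :=
    contDiff_dirDeriv hf two_add_one_eq_three.le v
  have hf'' (v : ℝ × ℝ × ℝ) : Differentiable ℝ ↿(dirDeriv v (dirDeriv v f)) :=
    (contDiff_dirDeriv (hf' v) one_add_one_eq_two.le v).differentiable one_ne_zero
  have dirDeriv_comm₂ (v w : ℝ × ℝ × ℝ) : dirDeriv v (dirDeriv w (dirDeriv w f)) =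
      dirDeriv w (dirDeriv w (dirDeriv v f)) := by
    rw [dirDeriv_comm (hf' w), dirDeriv_comm hf₂ v w]
  rw [dt2_eq_dirDeriv ((contDiff_lap2 (n := 1) hf (by norm_num)).differentiable one_ne_zero),
    lap2_eq_dirDeriv hf₂, dirDeriv_add (hf'' _) (hf'' _), dirDeriv_comm₂, dirDeriv_comm₂,
    dt2_eq_dirDeriv (hf₂.differentiable two_ne_zero), lap2_eq_dirDeriv (hf' _)]

theorem dt2_sub_const_smul_lap2 (hf : ContDiff ℝ 3 ↿f) (c : ℝ) :
    dt2 (f - c • lap2 f) = dt2 f - c • lap2 (dt2 f) := by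
  have hlap : Differentiable ℝ ↿(lap2 f) :=
    (contDiff_lap2 (n := 1) hf (by norm_num)).differentiable one_ne_zero
  simp only [sub_eq_add_neg, ← neg_smul]
  rw [dt2_add (hf.differentiable three_ne_zero) (hlap.const_smul (-c)), dt2_const_smul,
    dt2_lap2 hf]

theorem div2_sub_const_smul_mul (hf : Differentiable ℝ ↿f) (hg : Differentiable ℝ ↿g)
    (hu₁ : Differentiable ℝ ↿u₁) (hu₂ : Differentiable ℝ ↿u₂) (c : ℝ) :
    div2 ((f - c • g) * u₁) ((f - c • g) * u₂)
      = div2 (f * u₁) (f * u₂) - c • div2 (g * u₁) (g * u₂) := by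
  simp only [sub_eq_add_neg, ← neg_smul, add_mul, smul_mul_assoc]
  rw [div2_add (hf.mul hu₁) (hf.mul hu₂) ((hg.mul hu₁).const_smul (-c))
    ((hg.mul hu₂).const_smul (-c)), div2_const_smul]

end SpaceTime

theorem eta_tilde_identity_2d_general {ε : ℝ} {η u₁ u₂ : ℝ → ℝ → ℝ → ℝ}
    (hη : ContDiff ℝ 3 ↿η) (hu₁ : ContDiff ℝ 3 ↿u₁) (hu₂ : ContDiff ℝ 3 ↿u₂)
    (heq : dt2 η + div2 u₁ u₂ + ε • div2 (η * u₁) (η * u₂) = 0) :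
    dt2 (η - ε • lap2 η) + div2 u₁ u₂ - ε • lap2 (div2 u₁ u₂)
        + ε • div2 ((η - ε • lap2 η) * u₁) ((η - ε • lap2 η) * u₂)
      = ε ^ 2 • (lap2 (div2 (η * u₁) (η * u₂)) - div2 (lap2 η * u₁) (lap2 η * u₂)) := by
  have contDiff_div_u : ContDiff ℝ 2 ↿(div2 u₁ u₂) :=
    contDiff_div2 hu₁ hu₂ two_add_one_eq_three.le
  have contDiff_div_ηu : ContDiff ℝ 2 ↿(div2 (η * u₁) (η * u₂)) :=
    contDiff_div2 (hη.mul hu₁) (hη.mul hu₂) two_add_one_eq_three.le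
  have contDiff_dt_η : ContDiff ℝ 2 ↿(dt2 η) := contDiff_dt2 hη two_add_one_eq_three.le
  have contDiff_lap_η : ContDiff ℝ 1 ↿(lap2 η) := contDiff_lap2 hη (by norm_num)
  have lap_heq : lap2 (dt2 η) + lap2 (div2 u₁ u₂) + ε • lap2 (div2 (η * u₁) (η * u₂)) = 0 := by
    rw [← lap2_const_smul, ← lap2_add contDiff_dt_η contDiff_div_u,
      ← lap2_add (contDiff_dt_η.add contDiff_div_u) (contDiff_div_ηu.const_smul ε), heq]
    simpa using lap2_const_smul 0 0
  rw [dt2_sub_const_smul_lap2 hη, div2_sub_const_smul_mul (hη.differentiable three_ne_zero)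
    (contDiff_lap_η.differentiable one_ne_zero) (hu₁.differentiable three_ne_zero)
    (hu₂.differentiable three_ne_zero)]
  linear_combination (norm := module) heq - ε • lap_heq

/-- Equation (3.41) of the paper: if `η_t + ∇·u + ε∇·(ηu) = 0` and `η̃ = η - εΔη`, then
`η̃_t + ∇·u - εΔ(∇·u) + ε∇·(η̃u) = ε²(Δ∇·(ηu) - ∇·((Δη)u))`. -/
theorem eta_tilde_identity_2d (ε : ℝ) (hε : 0 < ε) (η u₁ u₂ : ℝ → ℝ → ℝ → ℝ)
    (hη : ContDiff ℝ (⊤ : ℕ∞) fun p : ℝ × ℝ × ℝ => η p.1 p.2.1 p.2.2)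
    (hu₁ : ContDiff ℝ (⊤ : ℕ∞) fun p : ℝ × ℝ × ℝ => u₁ p.1 p.2.1 p.2.2)
    (hu₂ : ContDiff ℝ (⊤ : ℕ∞) fun p : ℝ × ℝ × ℝ => u₂ p.1 p.2.1 p.2.2)
    (heq : ∀ t x y, dt2 η t x y + div2 u₁ u₂ t x y
      + ε * div2 (fun t x y => η t x y * u₁ t x y)
              (fun t x y => η t x y * u₂ t x y) t x y = 0) :
    ∀ t x y,
      dt2 (fun t x y => η t x y - ε * lap2 η t x y) t x y
        + div2 u₁ u₂ t x y - ε * lap2 (div2 u₁ u₂) t x y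
        + ε * div2 (fun t x y => (η t x y - ε * lap2 η t x y) * u₁ t x y)
                 (fun t x y => (η t x y - ε * lap2 η t x y) * u₂ t x y) t x y
      = ε ^ 2 * (lap2 (div2 (fun t x y => η t x y * u₁ t x y)
                           (fun t x y => η t x y * u₂ t x y)) t x y
          - div2 (fun t x y => lap2 η t x y * u₁ t x y)
                 (fun t x y => lap2 η t x y * u₂ t x y) t x y) := by
  have of_smooth {f : ℝ → ℝ → ℝ → ℝ} (hf : ContDiff ℝ (⊤ : ℕ∞) ↿f) : ContDiff ℝ 3 ↿f :=
    hf.of_le (WithTop.coe_le_coe.2 le_top)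
  intro t x y
  exact congrFun₃ (eta_tilde_identity_2d_general (of_smooth hη) (of_smooth hu₁) (of_smooth hu₂)
    (funext₃ heq)) t x y
end
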